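/- Let q = ux + 2 + 2g, z = q² g⁻¹, s = xv + uy + (−(1/2)ux + g − 1)ζ − 2(1 + g), ω = q g⁻¹ s and θ = s² g⁻¹, all elements of D. Then s is a normal element of D (sD = Ds), the elements ω and θ are central in D, and zθ = ω². -/

import Mathlib

open FreeAlgebra

/-- Generators of the double of the Jordan plane. -/
inductive JGen : Type
  | u | v | zeta | g | ginv | x | y

variable (k : Type) [Field k] [IsAlgClosed k] [CharZero k]

/-- The defining relations of the double of the Jordan plane. -/
inductive JRel : FreeAlgebra k JGen → FreeAlgebra k JGen → Prop
  | gginv : JRel (ι k .g * ι k .ginv) 1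
  | ginvg : JRel (ι k .ginv * ι k .g) 1
  | zg : JRel (ι k .zeta * ι k .g) (ι k .g * ι k .zeta)
  | gx : JRel (ι k .g * ι k .x) (ι k .x * ι k .g)
  | gy : JRel (ι k .g * ι k .y) (ι k .y * ι k .g + ι k .x * ι k .g)
  | zy : JRel (ι k .zeta * ι k .y) (ι k .y * ι k .zeta + ι k .y)
  | zx : JRel (ι k .zeta * ι k .x) (ι k .x * ι k .zeta + ι k .x)
  | ug : JRel (ι k .u * ι k .g) (ι k .g * ι k .u)
  | vg : JRel (ι k .v * ι k .g) (ι k .g * ι k .v + ι k .g * ι k .u)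
  | vz : JRel (ι k .v * ι k .zeta) (ι k .zeta * ι k .v + ι k .v)
  | uz : JRel (ι k .u * ι k .zeta) (ι k .zeta * ι k .u + ι k .u)
  | yx : JRel (ι k .y * ι k .x) (ι k .x * ι k .y - (1/2 : k) • (ι k .x * ι k .x))
  | vu : JRel (ι k .v * ι k .u) (ι k .u * ι k .v - (1/2 : k) • (ι k .u * ι k .u))
  | ux : JRel (ι k .u * ι k .x) (ι k .x * ι k .u)
  | vx : JRel (ι k .v * ι k .x) (ι k .x * ι k .v + (1 - ι k .g) + ι k .x * ι k .u)
  | uy : JRel (ι k .u * ι k .y) (ι k .y * ι k .u + (1 - ι k .g))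
  | vy : JRel (ι k .v * ι k .y) (ι k .y * ι k .v - ι k .g * ι k .zeta + ι k .y * ι k .u)

/-- The double of the Jordan plane, as the presented algebra. -/
def D : Type := RingQuot (JRel k)

noncomputable instance : Ring (D k) := inferInstanceAs (Ring (RingQuot (JRel k)))
noncomputable instance : Algebra k (D k) := inferInstanceAs (Algebra k (RingQuot (JRel k)))

/-- The canonical projection from the free algebra onto `D`. -/
noncomputable def Dmk : FreeAlgebra k JGen →ₐ[k] D k := RingQuot.mkAlgHom k (JRel k)

noncomputable def DU : D k := Dmk k (ι k .u)
noncomputable def DV : D k := Dmk k (ι k .v)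
noncomputable def DZ : D k := Dmk k (ι k .zeta)
noncomputable def DG : D k := Dmk k (ι k .g)
noncomputable def DGinv : D k := Dmk k (ι k .ginv)
noncomputable def DX : D k := Dmk k (ι k .x)
noncomputable def DY : D k := Dmk k (ι k .y)

set_option synthInstance.maxHeartbeats 1000000
set_option maxHeartbeats 2000000


set_option linter.unusedSimpArgs false
set_option linter.unusedSectionVars false

section jcalc
variable {F A : Type} [Field F] [CharZero F] [Ring A] [Algebra F A]

theorem assoc_rule {a b c : A} (h : a * b = c) (t : A) : a * (b * t) = c * t := by
  rw [← mul_assoc, h]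

theorem core (u v z g x y : A)
    (zg : z * g = g * z) (gx : g * x = x * g) (gy : g * y = y * g + x * g)
    (zy : z * y = y * z + y) (zx : z * x = x * z + x) (ug : u * g = g * u)
    (vg : v * g = g * v + g * u) (vz : v * z = z * v + v) (uz : u * z = z * u + u)
    (yx : y * x = x * y - (1/2 : F) • (x * x)) (vu : v * u = u * v - (1/2 : F) • (u * u))
    (ux : u * x = x * u) (vx : v * x = x * v + (1 - g) + x * u)
    (uy : u * y = y * u + (1 - g)) (vy : v * y = y * v - g * z + y * u)
    (q s : A) (hq : q = u * x + 2 + 2 * g)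
    (hs : s = x * v + u * y + (-((1/2 : F) • (u * x)) + g - 1) * z - 2 * (1 + g)) :
    (q * u = u * q ∧ q * v = (v - (1/2 : F) • u) * q ∧ q * z = z * q ∧ q * g = g * q ∧
      q * x = x * q ∧ q * y = (y + (1/2 : F) • x) * q) ∧
    (s * u = u * s ∧ s * v = (v - (1/2 : F) • u) * s ∧ s * z = z * s ∧ s * g = g * s ∧
      s * x = x * s ∧ s * y = (y + (1/2 : F) • x) * s) := by
  have h2 : (2 : A) = (2 : F) • (1 : A) := by
    rw [Algebra.smul_def, map_ofNat, mul_one]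
  rw [h2] at hq hs
  subst hq hs
  have zg' := assoc_rule zg
  have gx' := assoc_rule gx
  have gy' := assoc_rule gy
  have zy' := assoc_rule zy
  have zx' := assoc_rule zx
  have ug' := assoc_rule ug
  have vg' := assoc_rule vg
  have vz' := assoc_rule vz
  have uz' := assoc_rule uz
  have yx' := assoc_rule yx
  have vu' := assoc_rule vu
  have ux' := assoc_rule ux
  have vx' := assoc_rule vx
  have uy' := assoc_rule uy
  have vy' := assoc_rule vy
  refine ⟨⟨?_, ?_, ?_, ?_, ?_, ?_⟩, ?_, ?_, ?_, ?_, ?_, ?_⟩ <;>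
  · simp only [mul_add, add_mul, mul_sub, sub_mul, mul_assoc, smul_mul_assoc, mul_smul_comm,
      neg_mul, mul_neg, mul_one, one_mul, smul_add, smul_sub, smul_neg,
      zg, gx, gy, zy, zx, ug, vg, vz, uz, yx, vu, ux, vx, uy, vy,
      zg', gx', gy', zy', zx', ug', vg', vz', uz', yx', vu', ux', vx', uy', vy']
    try module

theorem final (u v z g i x y q s : A) (gi : g * i = 1) (ig : i * g = 1)
    (zg : z * g = g * z) (gx : g * x = x * g) (gy : g * y = y * g + x * g)
    (ug : u * g = g * u) (vg : v * g = g * v + g * u)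
    (hq : q * u = u * q ∧ q * v = (v - (1/2 : F) • u) * q ∧ q * z = z * q ∧ q * g = g * q ∧
      q * x = x * q ∧ q * y = (y + (1/2 : F) • x) * q)
    (hs : s * u = u * s ∧ s * v = (v - (1/2 : F) • u) * s ∧ s * z = z * s ∧ s * g = g * s ∧
      s * x = x * s ∧ s * y = (y + (1/2 : F) • x) * s) (qs : s * q = q * s) :
    (q * i = i * q ∧ s * i = i * s) ∧
    (∀ w, (w = q * i * s ∨ w = s ^ 2 * i) → w * u = u * w ∧ w * v = v * w ∧ w * z = z * w ∧
      w * g = g * w ∧ w * i = i * w ∧ w * x = x * w ∧ w * y = y * w) ∧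
    (q ^ 2 * i) * (s ^ 2 * i) = (q * i * s) ^ 2 := by
  obtain ⟨qu, qv, qz, qg, qx, qy⟩ := hq
  obtain ⟨su, sv, sz, sg, sx, sy⟩ := hs
  have inv : ∀ a b : A, a * g = g * b → i * a = b * i := by
    intro a b h
    calc i * a = i * (a * g) * i := by rw [mul_assoc, mul_assoc, gi, mul_one]
      _ = b * i := by rw [h, ← mul_assoc, ig, one_mul]
  have iq := inv q q qg
  have is := inv s s sg
  have iu := inv u u ug
  have iz := inv z z zg
  have ix := inv x x gx.symm
  have iv : i * v = (v + u) * i := inv v (v + u) (by rw [vg, mul_add])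
  have iy : i * y = (y - x) * i := inv y (y - x) (by rw [mul_sub, gy, gx]; abel)
  have gii : g * i = i * g := by rw [gi, ig]
  refine ⟨⟨iq.symm, is.symm⟩, ?_, ?_⟩
  · have qu' := assoc_rule qu
    have qv' := assoc_rule qv
    have qz' := assoc_rule qz
    have qg' := assoc_rule qg
    have qx' := assoc_rule qx
    have qy' := assoc_rule qy
    have su' := assoc_rule su
    have sv' := assoc_rule sv
    have sz' := assoc_rule sz
    have sg' := assoc_rule sg
    have sx' := assoc_rule sx
    have sy' := assoc_rule sy
    have iu' := assoc_rule iu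
    have iv' := assoc_rule iv
    have iz' := assoc_rule iz
    have ix' := assoc_rule ix
    have iy' := assoc_rule iy
    have gi' := assoc_rule gi
    have ig' := assoc_rule ig
    have si' := assoc_rule is.symm
    have qi' := assoc_rule iq.symm
    rintro w (rfl | rfl) <;> refine ⟨?_, ?_, ?_, ?_, ?_, ?_, ?_⟩ <;>
    · simp only [pow_two, mul_add, add_mul, mul_sub, sub_mul, mul_assoc, smul_mul_assoc,
        mul_smul_comm, mul_one, one_mul, smul_add, smul_sub,
        qu, qv, qz, qg, qx, qy, su, sv, sz, sg, sx, sy, iu, iv, iz, ix, iy, gi, ig,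
        is.symm, iq.symm, si', qi',
        qu', qv', qz', qg', qx', qy', su', sv', sz', sg', sx', sy', iu', iv', iz', ix', iy',
        gi', ig']
      try module
  · have qs' := assoc_rule qs
    have si' := assoc_rule is.symm
    have qi' := assoc_rule iq.symm
    simp only [pow_two, mul_assoc, qs, qs', si', qi', is.symm, iq.symm]
end jcalc

theorem D_ind (P : D k → Prop) (h0 : ∀ r : k, P (algebraMap k (D k) r))
    (ha : ∀ a b, P a → P b → P (a + b)) (hm : ∀ a b, P a → P b → P (a * b))
    (hu : P (DU k)) (hv : P (DV k)) (hz : P (DZ k)) (hg : P (DG k)) (hi : P (DGinv k))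
    (hx : P (DX k)) (hy : P (DY k)) (d : D k) : P d := by
  obtain ⟨a, rfl⟩ : ∃ a, Dmk k a = d := RingQuot.mkAlgHom_surjective k (JRel k) d
  induction a using FreeAlgebra.induction with
  | grade0 r => rw [AlgHom.commutes]; exact h0 r
  | grade1 t => cases t <;> assumption
  | mul a b iha ihb => rw [map_mul]; exact hm _ _ iha ihb
  | add a b iha ihb => rw [map_add]; exact ha _ _ iha ihb

theorem Drel {a b : FreeAlgebra k JGen} (h : JRel k a b) : Dmk k a = Dmk k b :=
  RingQuot.mkAlgHom_rel k h

/-- with `q = ux + 2 + 2g`, `z = q²g⁻¹`, `s = xv + uy + (−(1/2)ux + g − 1)ζ −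
2(1+g)`, `ω = qg⁻¹s` and `θ = s²g⁻¹`, the element `s` is normal in `D` (`sD = Ds`), the
elements `ω` and `θ` are central in `D`, and `zθ = ω²`. -/
theorem s_normal_omega_theta_central :
    letI q : D k := DU k * DX k + 2 + 2 * DG k
    letI z : D k := q ^ 2 * DGinv k
    letI s : D k := DX k * DV k + DU k * DY k +
      (-((1/2 : k) • (DU k * DX k)) + DG k - 1) * DZ k - 2 * (1 + DG k)
    letI ω : D k := q * DGinv k * s
    letI θ : D k := s ^ 2 * DGinv k
    {w : D k | ∃ d : D k, w = s * d} = {w : D k | ∃ d : D k, w = d * s} ∧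
    (∀ d : D k, ω * d = d * ω) ∧
    (∀ d : D k, θ * d = d * θ) ∧
    z * θ = ω ^ 2 := by
  generalize hqd : DU k * DX k + 2 + 2 * DG k = q
  generalize hsd : DX k * DV k + DU k * DY k +
      (-((1/2 : k) • (DU k * DX k)) + DG k - 1) * DZ k - 2 * (1 + DG k) = s
  have gi : DG k * DGinv k = 1 := by
    simpa [DU, DV, DZ, DG, DGinv, DX, DY] using Drel k .gginv
  have ig : DGinv k * DG k = 1 := by
    simpa [DU, DV, DZ, DG, DGinv, DX, DY] using Drel k .ginvg
  have zg : DZ k * DG k = DG k * DZ k := by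
    simpa [DU, DV, DZ, DG, DGinv, DX, DY] using Drel k .zg
  have gx : DG k * DX k = DX k * DG k := by
    simpa [DU, DV, DZ, DG, DGinv, DX, DY] using Drel k .gx
  have gy : DG k * DY k = DY k * DG k + DX k * DG k := by
    simpa [DU, DV, DZ, DG, DGinv, DX, DY] using Drel k .gy
  have zy : DZ k * DY k = DY k * DZ k + DY k := by
    simpa [DU, DV, DZ, DG, DGinv, DX, DY] using Drel k .zy
  have zx : DZ k * DX k = DX k * DZ k + DX k := by
    simpa [DU, DV, DZ, DG, DGinv, DX, DY] using Drel k .zx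
  have ug : DU k * DG k = DG k * DU k := by
    simpa [DU, DV, DZ, DG, DGinv, DX, DY] using Drel k .ug
  have vg : DV k * DG k = DG k * DV k + DG k * DU k := by
    simpa [DU, DV, DZ, DG, DGinv, DX, DY] using Drel k .vg
  have vz : DV k * DZ k = DZ k * DV k + DV k := by
    simpa [DU, DV, DZ, DG, DGinv, DX, DY] using Drel k .vz
  have uz : DU k * DZ k = DZ k * DU k + DU k := by
    simpa [DU, DV, DZ, DG, DGinv, DX, DY] using Drel k .uz
  have yx : DY k * DX k = DX k * DY k - (1/2 : k) • (DX k * DX k) := by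
    have := Drel k .yx
    rwa [map_sub, map_smul, map_mul, map_mul, map_mul] at this
  have vu : DV k * DU k = DU k * DV k - (1/2 : k) • (DU k * DU k) := by
    have := Drel k .vu
    rwa [map_sub, map_smul, map_mul, map_mul, map_mul] at this
  have ux : DU k * DX k = DX k * DU k := by
    simpa [DU, DV, DZ, DG, DGinv, DX, DY] using Drel k .ux
  have vx : DV k * DX k = DX k * DV k + (1 - DG k) + DX k * DU k := by
    simpa [DU, DV, DZ, DG, DGinv, DX, DY] using Drel k .vx
  have uy : DU k * DY k = DY k * DU k + (1 - DG k) := by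
    simpa [DU, DV, DZ, DG, DGinv, DX, DY] using Drel k .uy
  have vy : DV k * DY k = DY k * DV k - DG k * DZ k + DY k * DU k := by
    simpa [DU, DV, DZ, DG, DGinv, DX, DY] using Drel k .vy
  obtain ⟨hq, hs⟩ := core (F := k) (DU k) (DV k) (DZ k) (DG k) (DX k) (DY k)
    zg gx gy zy zx ug vg vz uz yx vu ux vx uy vy q s hqd.symm hsd.symm
  have qs : s * q = q * s := by
    obtain ⟨su, -, -, sg, sx, -⟩ := hs
    have cu : Commute s (DU k) := su
    have cx : Commute s (DX k) := sx
    have cg : Commute s (DG k) := sg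
    have c2 : Commute s 2 := Commute.ofNat_right s 2
    rw [← hqd]
    exact ((cu.mul_right cx).add_right c2).add_right (c2.mul_right cg)
  obtain ⟨⟨qi, si⟩, hc, he⟩ := final (F := k) (DU k) (DV k) (DZ k) (DG k) (DGinv k) (DX k) (DY k)
    q s gi ig zg gx gy ug vg hq hs qs
  have cen : ∀ w, (w = q * DGinv k * s ∨ w = s ^ 2 * DGinv k) → ∀ d, w * d = d * w := by
    intro w hw
    obtain ⟨h1, h2, h3, h4, h5, h6, h7⟩ := hc w hw
    refine D_ind k _ ?_ ?_ ?_ h1 h2 h3 h4 h5 h6 h7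
    · intro r; exact (Algebra.commutes r w).symm
    · intro a b ha hb; rw [mul_add, add_mul, ha, hb]
    · intro a b ha hb; rw [← mul_assoc, ha, mul_assoc, hb, mul_assoc]
  refine ⟨?_, cen _ (Or.inl rfl), cen _ (Or.inr rfl), he⟩
  obtain ⟨su, sv, sz, sg, sx, sy⟩ := hs
  have r1 : ∀ d, ∃ e, s * d = e * s := by
    refine D_ind k _ ?_ ?_ ?_ ⟨_, su⟩ ⟨_, sv⟩ ⟨_, sz⟩ ⟨_, sg⟩ ⟨_, si⟩ ⟨_, sx⟩ ⟨_, sy⟩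
    · intro r; exact ⟨_, (Algebra.commutes r s).symm⟩
    · rintro a b ⟨a', ha⟩ ⟨b', hb⟩; exact ⟨a' + b', by rw [mul_add, add_mul, ha, hb]⟩
    · rintro a b ⟨a', ha⟩ ⟨b', hb⟩
      exact ⟨a' * b', by rw [← mul_assoc, ha, mul_assoc, hb, mul_assoc]⟩
  have r2 : ∀ d, ∃ e, d * s = s * e := by
    refine D_ind k _ ?_ ?_ ?_ ⟨_, su.symm⟩ ⟨DV k + (1/2 : k) • DU k, ?_⟩ ⟨_, sz.symm⟩ ⟨_, sg.symm⟩
      ⟨_, si.symm⟩ ⟨_, sx.symm⟩ ⟨DY k - (1/2 : k) • DX k, ?_⟩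
    · intro r; exact ⟨_, Algebra.commutes r s⟩
    · rintro a b ⟨a', ha⟩ ⟨b', hb⟩; exact ⟨a' + b', by rw [mul_add, add_mul, ha, hb]⟩
    · rintro a b ⟨a', ha⟩ ⟨b', hb⟩
      exact ⟨a' * b', by rw [mul_assoc, hb, ← mul_assoc, ha, mul_assoc]⟩
    · rw [mul_add, sv, mul_smul_comm, su, sub_mul, smul_mul_assoc]; abel
    · rw [mul_sub, sy, mul_smul_comm, sx, add_mul, smul_mul_assoc]; abel
  ext w
  constructor
  · rintro ⟨d, rfl⟩; exact r1 d
  · rintro ⟨d, rfl⟩; exact r2 d
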